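/- The (uniform) submonoid membership problem for the one-relator group G = Gp⟨a, t | a(tat⁻¹) = (tat⁻¹)a⟩ is undecidable: the predicate on pairs (W, w) ∈ List (List (Fin 2 × Bool)) × List (Fin 2 × Bool) given by 'π(w) belongs to the submonoid Submonoid.closure {π(u) | u ∈ W} of G' is not ComputablePred. -/

import Mathlib

/-- The relator `a t a t⁻¹ a⁻¹ t a⁻¹ t⁻¹` (i.e. `a(tat⁻¹)=(tat⁻¹)a`), with `a = of 0`, `t = of 1`. -/
def oneRel : FreeGroup (Fin 2) :=
  FreeGroup.of 0 * FreeGroup.of 1 * FreeGroup.of 0 * (FreeGroup.of 1)⁻¹ *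
    (FreeGroup.of 0)⁻¹ * FreeGroup.of 1 * (FreeGroup.of 0)⁻¹ * (FreeGroup.of 1)⁻¹

/-- The one-relator group `G = Gp⟨a,t | a(tat⁻¹)=(tat⁻¹)a⟩`. -/
abbrev G : Type := PresentedGroup {oneRel}

/-- Evaluation of words: the letter `(i, true)` goes to the image of `FreeGroup.of i` in `G`
and `(i, false)` to its inverse. -/
def π (l : List (Fin 2 × Bool)) : G := PresentedGroup.mk {oneRel} (FreeGroup.mk l)

/-!
The conjugates `t ^ i * a * t ^ (-i)` generate a right-angled Artin subgroup of `G`: neighbours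
commute, and there are no other relations, as maps to wreath products with `ℤ` show. Four successive
conjugates `a, b, c, d` suffice to replace the exponent `n` of a power of `b` by an affine function
of `n`, and thus to simulate counter machines in Gödel encoding by a rational subset of the
subgroup. Further conjugates, which serve as free letters, turn the rational subset into a finitely
generated submonoid: they mark the states of an automaton, and `q * u * p⁻¹` stands for the
transition from `p` to `q` with label `u`.

Unintended products are excluded by letting the subgroup act on concrete sets, which tell them apart
from the intended ones.
-/

open Function Relation

/-! ### Regular expressions as nondeterministic programs -/

section Executes

variable {α β σ τ : Type*}

/-- The transitions performed by a regular expression read as a nondeterministic program: its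
letters are elementary instructions, interpreted by `I` as transition relations, and sum, product
and star are choice, sequencing and iteration. -/
def Executes (I : α → σ → σ → Prop) : RegularExpression α → σ → σ → Prop
  | .zero => fun _ _ => False
  | .epsilon => fun x y => x = y
  | .char a => I a
  | .plus P Q => fun x y => Executes I P x y ∨ Executes I Q x y
  | .comp P Q => Comp (Executes I P) (Executes I Q)
  | .star P => ReflTransGen (Executes I P)

variable {I : α → σ → σ → Prop} {P Q : RegularExpression α} {x y z : σ}

@[simp] theorem not_executes_zero : ¬ Executes I 0 x y := id

@[simp] theorem executes_one : Executes I 1 x y ↔ x = y := Iff.rfl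

@[simp] theorem executes_char {a : α} : Executes I (.char a) x y ↔ I a x y := Iff.rfl

@[simp] theorem executes_add :
    Executes I (P + Q) x y ↔ Executes I P x y ∨ Executes I Q x y := Iff.rfl

@[simp] theorem executes_mul :
    Executes I (P * Q) x y ↔ ∃ u, Executes I P x u ∧ Executes I Q u y := Iff.rfl

@[simp] theorem executes_star :
    Executes I (.star P) x y ↔ ReflTransGen (Executes I P) x y := Iff.rfl

theorem executes_sum {l : List (RegularExpression α)} :
    Executes I l.sum x y ↔ ∃ P ∈ l, Executes I P x y := by
  induction l with
  | nil => simp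
  | cons P l ih => simp [ih]

/-- Substitution of a program for each letter. -/
def substitute (θ : α → RegularExpression β) : RegularExpression α → RegularExpression β
  | .zero => 0
  | .epsilon => 1
  | .char a => θ a
  | .plus P Q => substitute θ P + substitute θ Q
  | .comp P Q => substitute θ P * substitute θ Q
  | .star P => .star (substitute θ P)

theorem executes_substitute {J : β → σ → σ → Prop} (θ : α → RegularExpression β)
    (P : RegularExpression α) :
    Executes J (substitute θ P) = Executes (fun a => Executes J (θ a)) P := by
  induction P with
  | zero | epsilon | char => rfl
  | plus P Q ihP ihQ => funext x y; simp [substitute, Executes, ihP, ihQ]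
  | comp P Q ihP ihQ => funext x y; simp [substitute, Executes, ihP, ihQ, Comp]
  | star P ih => simp [substitute, Executes, ← ih]

theorem Executes.preserves {S : σ → Prop} (hI : ∀ a x y, I a x y → S x → S y)
    (h : Executes I P x y) (hx : S x) : S y := by
  induction P generalizing x y with
  | zero => exact h.elim
  | epsilon => exact h ▸ hx
  | char a => exact hI a x y h hx
  | plus P Q ihP ihQ => exact h.elim (ihP · hx) (ihQ · hx)
  | comp P Q ihP ihQ =>
    obtain ⟨u, hu, huy⟩ := h
    exact ihQ huy (ihP hu hx)
  | star P ih =>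
    induction h with
    | refl => exact hx
    | tail _ hlast ih' => exact ih hlast ih'

theorem Executes.simulate_or_dead {J : α → τ → τ → Prop} {R : σ → τ → Prop} {D : τ → Prop}
    (hD : ∀ a x y, J a x y → D x → D y)
    (hJ : ∀ a x y y', J a y y' → R x y → D y' ∨ ∃ x', I a x x' ∧ R x' y')
    {x : σ} {y y' : τ} (h : Executes J P y y') (hxy : R x y) :
    D y' ∨ ∃ x', Executes I P x x' ∧ R x' y' := by
  induction P generalizing x y y' with
  | zero => exact h.elim
  | epsilon => exact .inr ⟨x, rfl, h ▸ hxy⟩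
  | char a => exact hJ a x y y' h hxy
  | plus P Q ihP ihQ =>
    rcases h with h | h
    · exact (ihP h hxy).imp_right fun ⟨x', hx', hR⟩ => ⟨x', .inl hx', hR⟩
    · exact (ihQ h hxy).imp_right fun ⟨x', hx', hR⟩ => ⟨x', .inr hx', hR⟩
  | comp P Q ihP ihQ =>
    obtain ⟨z, hz, hzy⟩ := h
    rcases ihP hz hxy with hDz | ⟨u, hu, hR⟩
    · exact .inl (hzy.preserves hD hDz)
    · exact (ihQ hzy hR).imp_right fun ⟨x', hx', hR'⟩ => ⟨x', ⟨u, hu, hx'⟩, hR'⟩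
  | star P ih =>
    induction h with
    | refl => exact .inr ⟨x, .refl, hxy⟩
    | tail _ hlast ih' =>
      rcases ih' with hDz | ⟨u, hu, hR⟩
      · exact .inl (hlast.preserves hD hDz)
      · exact (ih hlast hR).imp_right fun ⟨x', hx', hR'⟩ => ⟨x', hu.tail hx', hR'⟩

theorem Executes.simulate {J : α → τ → τ → Prop} {R : σ → τ → Prop}
    (hJ : ∀ a x y y', J a y y' → R x y → ∃ x', I a x x' ∧ R x' y')
    {x : σ} {y y' : τ} (h : Executes J P y y') (hxy : R x y) :
    ∃ x', Executes I P x x' ∧ R x' y' :=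
  (h.simulate_or_dead (D := fun _ => False) (fun _ _ _ _ => id)
    (fun a x y y' h hR => .inr (hJ a x y y' h hR)) hxy).resolve_left id

end Executes

/-! ### Counter programs -/

/-- The instructions of a counter machine: increment a register, decrement a nonzero register, and
test a register for zero. -/
inductive Instr
  | inc (i : ℕ)
  | dec (i : ℕ)
  | zero (i : ℕ)

/-- The effect of an instruction on the contents of the registers. -/
def Instr.Step : Instr → (ℕ → ℕ) → (ℕ → ℕ) → Prop
  | .inc i, v, w => w = update v i (v i + 1)
  | .dec i, v, w => ∃ x, v i = x + 1 ∧ w = update v i x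
  | .zero i, v, w => v i = 0 ∧ w = v

/-- Started in `v`, the program `P` can stop in `w` and nowhere else. -/
def Transforms (P : RegularExpression Instr) (v w : ℕ → ℕ) : Prop :=
  ∀ u, Executes Instr.Step P v u ↔ u = w

section Transforms

variable {P Q : RegularExpression Instr} {v w u : ℕ → ℕ} {i j s : ℕ}

theorem Transforms.of_eq (h : Transforms P v w) (hw : w = u) : Transforms P v u := hw ▸ h

theorem transforms_one (v : ℕ → ℕ) : Transforms 1 v v := fun _ => eq_comm

theorem transforms_inc (i : ℕ) (v : ℕ → ℕ) :
    Transforms (.char (.inc i)) v (update v i (v i + 1)) := fun _ => Iff.rfl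

theorem Transforms.mul (hP : Transforms P v w) (hQ : Transforms Q w u) :
    Transforms (P * Q) v u := fun u' => by
  simp [hP _, hQ u']

/-- `while rᵢ ≠ 0 do (rᵢ := rᵢ - 1; P)`. -/
def loop (i : ℕ) (P : RegularExpression Instr) : RegularExpression Instr :=
  .star (.char (.dec i) * P) * .char (.zero i)

theorem executes_loop_iff : Executes Instr.Step (loop i P) v w ↔
    (v i = 0 ∧ w = v) ∨ ∃ x u, v i = x + 1 ∧ Executes Instr.Step P (update v i x) u ∧
      Executes Instr.Step (loop i P) u w := by
  simp only [loop, executes_mul, executes_star, executes_char]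
  constructor
  · rintro ⟨w', hstar, hzero⟩
    rcases hstar.cases_head with rfl | ⟨u, ⟨_, ⟨x, hx, rfl⟩, hP⟩, hrest⟩
    · exact .inl hzero
    · exact .inr ⟨x, u, hx, hP, w', hrest, hzero⟩
  · rintro (hzero | ⟨x, u, hx, hP, w', hrest, hzero⟩)
    · exact ⟨v, .refl, hzero⟩
    · exact ⟨w', .head ⟨_, ⟨x, hx, rfl⟩, hP⟩ hrest, hzero⟩

theorem transforms_loop (σ : ℕ → ℕ → ℕ) (hσ : ∀ x, σ x i = x) (n : ℕ)
    (h : ∀ x < n, Transforms P (update (σ (x + 1)) i x) (σ x)) :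
    Transforms (loop i P) (σ n) (σ 0) := by
  intro w
  induction n with
  | zero => simp [executes_loop_iff (v := σ 0), hσ]
  | succ n ih =>
    rw [executes_loop_iff, ← ih fun x hx => h x (by omega)]
    simp [hσ, h n (by omega) _]

/-- Set register `i` to zero. -/
def clear (i : ℕ) : RegularExpression Instr := loop i 1

theorem transforms_clear (i : ℕ) (v : ℕ → ℕ) : Transforms (clear i) v (update v i 0) := by
  simpa [clear] using transforms_loop (P := 1) (update v i) (by simp) (v i) fun x _ => by
    simpa using transforms_one (update v i x)

/-- Add register `i` to register `j`, clearing `i`. -/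
def move (i j : ℕ) : RegularExpression Instr := loop i (.char (.inc j))

theorem transforms_move (hij : i ≠ j) (v : ℕ → ℕ) :
    Transforms (move i j) v (update (update v j (v j + v i)) i 0) := by
  simpa [move] using transforms_loop (fun x => update (update v j (v j + (v i - x))) i x)
    (by simp) (v i) fun x hx => (transforms_inc _ _).of_eq (by grind [update_apply])

/-- Add register `i` to register `j`, using the scratch register `s`. -/
def copy (i j s : ℕ) : RegularExpression Instr :=
  loop i (.char (.inc j) * .char (.inc s)) * move s i

theorem transforms_copy (hij : i ≠ j) (his : i ≠ s) (hjs : j ≠ s) (hs : v s = 0) :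
    Transforms (copy i j s) v (update v j (v j + v i)) := by
  have hloop := transforms_loop (i := i)
    (fun x => update (update (update v j (v j + (v i - x))) s (v i - x)) i x) (by simp)
    (v i) fun x hx =>
      ((transforms_inc j _).mul (transforms_inc s _)).of_eq (by grind [update_apply])
  have hstart : update (update (update v j (v j + (v i - v i))) s (v i - v i)) i (v i) = v := by
    grind [update_apply]
  rw [hstart] at hloop
  exact hloop.mul ((transforms_move his.symm _).of_eq (by grind [update_apply]))

end Transforms

/-! ### Compiling primitive recursive functions -/

/-- `P` computes `f` from the registers `inp` into the register `base`, provided that the registers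
from `base` on, which serve as workspace, are zero at the start; they are zero again at the end. -/
def Computes {n : ℕ} (P : RegularExpression Instr) (f : List.Vector ℕ n → ℕ) (inp : Fin n → ℕ)
    (base : ℕ) : Prop :=
  ∀ v : ℕ → ℕ, (∀ j, base ≤ j → v j = 0) →
    Transforms P v (update v base (f (.ofFn (v ∘ inp))))

/-- `f` is computable on any choice of input registers and workspace. -/
def Compilable {n : ℕ} (f : List.Vector ℕ n → ℕ) : Prop :=
  ∀ (inp : Fin n → ℕ) (base : ℕ), (∀ i, inp i < base) → ∃ P, Computes P f inp base

theorem exists_transforms_family {m n : ℕ} {g : Fin n → List.Vector ℕ m → ℕ}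
    (hg : ∀ i, Compilable (g i)) {inp : Fin m → ℕ} {base : ℕ}
    (hinp : ∀ i, inp i < base) :
    ∃ P, ∀ v : ℕ → ℕ, (∀ j, base ≤ j → v j = 0) → ∃ w, Transforms P v w ∧
      (∀ i : Fin n, w (base + i) = g i (.ofFn (v ∘ inp))) ∧
      ∀ j, j < base ∨ base + n ≤ j → w j = v j := by
  induction n with
  | zero => exact ⟨1, fun v _ => ⟨v, transforms_one v, fun i => i.elim0, fun _ _ => rfl⟩⟩
  | succ n ih =>
    obtain ⟨P, hP⟩ := ih fun i => hg i.castSucc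
    obtain ⟨Q, hQ⟩ := hg (Fin.last n) inp (base + n) fun i => by have := hinp i; omega
    refine ⟨P * Q, fun v hv => ?_⟩
    obtain ⟨w, hvw, hout, hrest⟩ := hP v hv
    have hinputs : w ∘ inp = v ∘ inp := funext fun i => hrest _ (.inl (hinp i))
    have hQw := hQ w fun j hj => by rw [hrest j (.inr hj), hv j (by omega)]
    rw [hinputs] at hQw
    refine ⟨_, hvw.mul hQw, fun i => ?_, fun j hj => ?_⟩
    · induction i using Fin.lastCases with
      | last => simp
      | cast i =>
        rw [update_of_ne (by simp [i.is_lt.ne])]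
        exact hout i
    · rw [update_of_ne (by omega), hrest j (by omega)]

theorem exists_transforms_clear_block (b k : ℕ) : ∃ P, ∀ v : ℕ → ℕ,
    Transforms P v fun j => if b ≤ j ∧ j < b + k then 0 else v j := by
  induction k with
  | zero => exact ⟨1, fun v => (transforms_one v).of_eq (by grind)⟩
  | succ k ih =>
    obtain ⟨P, hP⟩ := ih
    exact ⟨P * clear (b + k), fun v =>
      ((hP v).mul (transforms_clear _ _)).of_eq (by grind [update_apply])⟩

theorem compilable_zero : Compilable (fun _ : List.Vector ℕ 0 => 0) := fun _ base _ =>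
  ⟨1, fun v hv => (transforms_one v).of_eq (by simp [hv base le_rfl])⟩

theorem compilable_get {n : ℕ} (i : Fin n) : Compilable fun x => x.get i := by
  intro inp base hinp
  have := hinp i
  exact ⟨copy (inp i) base (base + 1), fun v hv =>
    (transforms_copy (by omega) (by omega) (by omega) (hv _ (by omega))).of_eq
      (by simp [hv base le_rfl])⟩

theorem compilable_succ : Compilable fun x : List.Vector ℕ 1 => x.head.succ := by
  intro inp base hinp
  obtain ⟨P, hP⟩ := compilable_get 0 inp base hinp
  exact ⟨P * .char (.inc base), fun v hv =>
    ((hP v hv).mul (transforms_inc _ _)).of_eq (by simp)⟩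

theorem Compilable.comp {m n : ℕ} {f : List.Vector ℕ n → ℕ} {g : Fin n → List.Vector ℕ m → ℕ}
    (hf : Compilable f) (hg : ∀ i, Compilable (g i)) :
    Compilable fun x => f (.ofFn fun i => g i x) := by
  intro inp base hinp
  obtain ⟨P, hP⟩ := exists_transforms_family hg fun i => (hinp i).trans base.lt_succ_self
  obtain ⟨Q, hQ⟩ := hf (fun i => base + 1 + i) (base + 1 + n) fun i => by omega
  obtain ⟨R, hR⟩ := exists_transforms_clear_block (base + 1) n
  refine ⟨P * (Q * (move (base + 1 + n) base * R)), fun v hv => ?_⟩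
  obtain ⟨w, hvw, hout, hrest⟩ := hP v fun j hj => hv j (by omega)
  have hQw := hQ w fun j hj => by rw [hrest j (.inr hj), hv j (by omega)]
  have hargs : (w ∘ fun i : Fin n => base + 1 + (i : ℕ)) = fun i => g i (.ofFn (v ∘ inp)) :=
    funext hout
  rw [hargs] at hQw
  refine (hvw.mul (hQw.mul ((transforms_move (by omega) _).mul (hR _)))).of_eq ?_
  grind [update_apply]

/-- One round of a primitive recursion by the function compiled to `Q`: the accumulator is register
`base` and the recursion variable is register `base + 1`. -/
def precBody (Q : RegularExpression Instr) (base : ℕ) : RegularExpression Instr :=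
  Q * (clear base * (move (base + 3) base * .char (.inc (base + 1))))

theorem Computes.transforms_precBody {n : ℕ} {g : List.Vector ℕ (n + 2) → ℕ} {inp : Fin n → ℕ}
    {base : ℕ} {Q : RegularExpression Instr}
    (hQ : Computes Q g (Fin.cons (base + 1) (Fin.cons base inp)) (base + 3)) {v : ℕ → ℕ}
    (hv : ∀ j, base + 3 ≤ j → v j = 0) :
    Transforms (precBody Q base) v (update (update v base
      (g (v (base + 1) ::ᵥ v base ::ᵥ .ofFn (v ∘ inp)))) (base + 1) (v (base + 1) + 1)) := by
  refine ((hQ v hv).mul ((transforms_clear _ _).mul ((transforms_move (by omega) _).mul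
    (transforms_inc _ _)))).of_eq ?_
  have hargs : List.Vector.ofFn (v ∘ (Fin.cons (base + 1) (Fin.cons base inp) : Fin (n + 2) → ℕ)) =
      v (base + 1) ::ᵥ v base ::ᵥ .ofFn (v ∘ inp) := by simp [List.Vector.ofFn, comp_def]
  rw [hargs]
  have := hv (base + 3) le_rfl
  grind [update_apply]

theorem Computes.transforms_loop_precBody {n : ℕ} {g : List.Vector ℕ (n + 2) → ℕ}
    {inp : Fin n → ℕ} {base : ℕ} {Q : RegularExpression Instr}
    (hQ : Computes Q g (Fin.cons (base + 1) (Fin.cons base inp)) (base + 3))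
    (hinp : ∀ i, inp i < base) {v : ℕ → ℕ} (hv : ∀ j, base ≤ j → v j = 0) {value : ℕ → ℕ}
    (hvalue : ∀ x, value (x + 1) = g (x ::ᵥ value x ::ᵥ .ofFn (v ∘ inp))) (N : ℕ) :
    Transforms (loop (base + 2) (precBody Q base))
      (update (update v base (value 0)) (base + 2) N)
      (update (update v (base + 1) N) base (value N)) := by
  -- The registers when `x` rounds of the loop remain to be done.
  let σ (x : ℕ) : ℕ → ℕ :=
    update (update (update v (base + 1) (N - x)) base (value (N - x))) (base + 2) x
  have hloop := transforms_loop (i := base + 2) (P := precBody Q base) σ (by simp [σ]) N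
    fun x hx => by
      refine (hQ.transforms_precBody fun j hj => ?_).of_eq ?_
      · grind [update_apply]
      · have hargs : List.Vector.ofFn (update (σ (x + 1)) (base + 2) x ∘ inp) =
            .ofFn (v ∘ inp) := by
          congr 1; grind [update_apply]
        have hstep : N - x = N - (x + 1) + 1 := by omega
        rw [hargs]
        grind [update_apply]
  have hstart : σ N = update (update v base (value 0)) (base + 2) N := by grind [update_apply]
  rw [hstart] at hloop
  exact hloop.of_eq (by grind [update_apply])

theorem Compilable.prec {n : ℕ} {f : List.Vector ℕ n → ℕ} {g : List.Vector ℕ (n + 2) → ℕ}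
    (hf : Compilable f) (hg : Compilable g) : Compilable fun x : List.Vector ℕ (n + 1) =>
      x.head.rec (f x.tail) fun y IH => g (y ::ᵥ IH ::ᵥ x.tail) := by
  intro inp base hinp
  have hinp₀ := hinp 0
  have hinp' (i : Fin n) : inp i.succ < base := hinp i.succ
  obtain ⟨P, hP⟩ := hf (fun i => inp i.succ) base hinp'
  obtain ⟨Q, hQ⟩ := hg (Fin.cons (base + 1) (Fin.cons base fun i => inp i.succ)) (base + 3)
    (Fin.cases (by simp) (Fin.cases (by simp) fun i => (hinp' i).trans (by omega)))
  refine ⟨P * (copy (inp 0) (base + 2) (base + 3) *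
    (loop (base + 2) (precBody Q base) * clear (base + 1))), fun v hv => ?_⟩
  set args : List.Vector ℕ n := .ofFn (v ∘ fun i => inp i.succ) with hargs
  set N := v (inp 0)
  obtain ⟨value, hvalue⟩ : ∃ value : ℕ → ℕ, ∀ x, value x =
    x.rec (f args) fun y IH => g (y ::ᵥ IH ::ᵥ args) := ⟨_, fun _ => rfl⟩
  have hvalue_zero : value 0 = f args := hvalue 0
  have hloop := hQ.transforms_loop_precBody hinp' hv (value := value)
    (fun x => by simp only [hvalue, ← hargs]) N
  have hcopy := transforms_copy (v := update v base (f args)) (i := inp 0) (j := base + 2)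
    (s := base + 3) (by omega) (by omega) (by omega) (by grind [update_apply])
  have hstart : update (update v base (f args)) (base + 2)
      (update v base (f args) (base + 2) + update v base (f args) (inp 0)) =
      update (update v base (value 0)) (base + 2) N := by
    grind [update_apply]
  have hresult : update (update (update v (base + 1) N) base (value N)) (base + 1) 0 =
      update v base (value N) := by
    grind [update_apply]
  have hhead : (List.Vector.ofFn (v ∘ inp)).head = N := by simp [N]
  have htail : (List.Vector.ofFn (v ∘ inp)).tail = args := by simp [args, comp_def]
  rw [hstart] at hcopy
  simp only [hhead, htail, ← hvalue]
  exact (hP v hv).mul (hcopy.mul (hloop.mul ((transforms_clear _ _).of_eq hresult)))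

theorem compilable_of_primrec' {n : ℕ} {f : List.Vector ℕ n → ℕ} (hf : Nat.Primrec' f) :
    Compilable f := by
  induction hf with
  | zero => exact compilable_zero
  | succ => exact compilable_succ
  | get i => exact compilable_get i
  | comp g _ _ ihf ihg => exact ihf.comp ihg
  | prec _ _ ihf ihg => exact ihf.prec ihg

theorem executes_star_inc_iff {i : ℕ} {v w : ℕ → ℕ} :
    Executes Instr.Step (.star (.char (.inc i))) v w ↔ ∃ k, w = update v i (v i + k) := by
  rw [executes_star]
  constructor
  · intro h
    induction h with
    | refl => exact ⟨0, by simp⟩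
    | tail _ hinc ih =>
      obtain ⟨k, rfl⟩ := ih
      exact ⟨k + 1, hinc.trans (by simp [add_assoc])⟩
  · rintro ⟨k, rfl⟩
    induction k with
    | zero => simp [ReflTransGen.refl]
    | succ k ih => exact ih.tail ((transforms_inc i _ _).2 (by simp [add_assoc]))

theorem Compilable.exists_search {F : List.Vector ℕ 2 → ℕ} (hF : Compilable F) :
    ∃ P, ∀ x : ℕ, Executes Instr.Step P (Pi.single 0 x) 0 ↔ ∃ k, F (x ::ᵥ k ::ᵥ .nil) = 0 := by
  obtain ⟨P, hP⟩ := hF ![0, 1] 2 (by simp [Fin.forall_fin_two])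
  refine ⟨.star (.char (.inc 1)) * (P * (.char (.zero 2) * (clear 0 * clear 1))), fun x => ?_⟩
  have hguess (k : ℕ) : Transforms P (update (Pi.single 0 x) 1 k)
      (update (update (Pi.single 0 x) 1 k) 2 (F (x ::ᵥ k ::ᵥ .nil))) :=
    (hP _ fun j hj => by grind [update_apply]).of_eq
      (by simp [List.Vector.ofFn])
  have hclear (v : ℕ → ℕ) : Transforms (clear 0 * clear 1) v (update (update v 0 0) 1 0) :=
    (transforms_clear _ _).mul (transforms_clear _ _)
  have hcheck (k : ℕ) : Executes Instr.Step (P * (.char (.zero 2) * (clear 0 * clear 1)))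
      (update (Pi.single 0 x) 1 k) 0 ↔ F (x ::ᵥ k ::ᵥ .nil) = 0 := by
    rw [executes_mul]
    simp only [hguess k _, exists_eq_left, executes_mul (P := .char _), executes_char, Instr.Step,
      update_self, hclear _ _]
    refine ⟨fun ⟨_, ⟨hk, _⟩, _⟩ => hk, fun hk => ⟨_, ⟨hk, rfl⟩, ?_⟩⟩
    funext j
    simp only [update_apply, Pi.single_apply, Pi.zero_apply]
    grind
  rw [executes_mul]
  simp only [executes_star_inc_iff, Pi.single_apply, one_ne_zero, if_false, zero_add, ← hcheck]
  exact ⟨fun ⟨_, ⟨k, hk⟩, h⟩ => ⟨k, hk ▸ h⟩, fun ⟨k, h⟩ => ⟨_, ⟨k, rfl⟩, h⟩⟩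

/-- The program guesses a running time of a partial recursive function and checks it. -/
theorem exists_program_not_computablePred : ∃ P : RegularExpression Instr,
    ¬ ComputablePred fun x : ℕ => Executes Instr.Step P (Pi.single 0 x) 0 := by
  let F : List.Vector ℕ 2 → ℕ := fun v =>
    if (Nat.Partrec.Code.evaln v.tail.head (Denumerable.ofNat Nat.Partrec.Code v.head) 0).isSome
    then 0 else 1
  have hF : Primrec F := .ite
    (Primrec.eq.comp (Primrec.option_isSome.comp (Nat.Partrec.Code.primrec_evaln.comp
      (((Primrec.vector_head.comp Primrec.vector_tail).pair
        ((Primrec.ofNat _).comp Primrec.vector_head)).pair (.const 0)))) (.const true))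
    (.const 0) (.const 1)
  obtain ⟨P, hP⟩ := (compilable_of_primrec' (.of_prim hF)).exists_search
  refine ⟨P, fun h => ComputablePred.halting_problem 0
    (.computable_of_manyOneReducible ⟨Encodable.encode, Computable.encode, fun c => ?_⟩ h)⟩
  have hFzero (k : ℕ) : F (Encodable.encode c ::ᵥ k ::ᵥ .nil) = 0 ↔
      ∃ y, y ∈ Nat.Partrec.Code.evaln k c 0 := by
    simp [F, Option.isSome_iff_exists]
  simp only [hP, hFzero, Part.dom_iff_mem, Nat.Partrec.Code.evaln_complete]
  exact exists_comm

/-! ### Affine programs -/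

/-- The partial affine map `residue + modulus * k ↦ intercept + slope * k` on `ℕ`. -/
structure AffineRule where
  modulus : ℕ
  residue : ℕ
  slope : ℕ
  intercept : ℕ

/-- The graph of an affine rule. -/
def AffineRule.Step (ρ : AffineRule) (n m : ℕ) : Prop :=
  ∃ k, n = ρ.residue + ρ.modulus * k ∧ m = ρ.intercept + ρ.slope * k

/-- The prime whose exponent stores register `i`. -/
noncomputable def registerPrime (i : ℕ) : ℕ := Nat.nth Nat.Prime i

theorem prime_registerPrime (i : ℕ) : (registerPrime i).Prime := Nat.prime_nth_prime i

theorem registerPrime_injective : Injective registerPrime :=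
  Nat.nth_injective Nat.infinite_setOfPred_prime

/-- The register contents with Gödel number `n`. -/
noncomputable def registers (n : ℕ) : ℕ → ℕ := fun i => n.factorization (registerPrime i)

section Registers

variable {i n : ℕ}

theorem registers_mul (hn : n ≠ 0) (i : ℕ) :
    registers (registerPrime i * n) = update (registers n) i (registers n i + 1) := by
  funext j
  rcases eq_or_ne j i with rfl | hj
  · simp [registers, Nat.factorization_mul (prime_registerPrime j).ne_zero hn,
      (prime_registerPrime j).factorization, add_comm]
  · simp [registers, Nat.factorization_mul (prime_registerPrime i).ne_zero hn,
      (prime_registerPrime i).factorization, registerPrime_injective.ne hj.symm, hj]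

theorem registers_eq_zero_iff (hn : n ≠ 0) : registers n i = 0 ↔ ¬ registerPrime i ∣ n := by
  rw [(prime_registerPrime i).dvd_iff_one_le_factorization hn, Nat.one_le_iff_ne_zero, not_not]
  rfl

theorem exists_eq_mul_of_registers_eq_succ {x : ℕ} (hn : n ≠ 0) (hx : registers n i = x + 1) :
    ∃ m ≠ 0, n = registerPrime i * m ∧ registers m = update (registers n) i x := by
  obtain ⟨m, rfl⟩ : registerPrime i ∣ n := not_not.1 fun h => by
    rw [← registers_eq_zero_iff hn] at h; omega
  have hm := right_ne_zero_of_mul hn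
  have hx' : registers m i = x := by simpa [registers_mul hm] using hx
  exact ⟨m, hm, rfl, by simp [registers_mul hm, ← hx']⟩

theorem registers_one : registers 1 = 0 := by
  funext i
  simp [registers]

theorem eq_one_of_registers_eq_zero (hn : n ≠ 0) (h : registers n = 0) : n = 1 := by
  by_contra hn1
  obtain ⟨q, hq, hqn⟩ := Nat.exists_prime_and_dvd hn1
  have hcount : registerPrime (Nat.count Nat.Prime q) = q := Nat.nth_count hq
  exact (registers_eq_zero_iff hn).1 (congrFun h _) (hcount.symm ▸ hqn)

theorem registers_two_pow (x : ℕ) : registers (2 ^ x) = Pi.single 0 x := by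
  have htwo : registerPrime 0 = 2 := Nat.nth_prime_zero_eq_two
  induction x with
  | zero => simp [registers_one]
  | succ x ih => rw [pow_succ', ← htwo, registers_mul (by simp [htwo]), htwo, ih]; simp [Pi.single]

end Registers

/-- The affine rules which perform an instruction on Gödel numbers. A test for zero becomes the
identity on each nonzero residue class. -/
noncomputable def Instr.rules : Instr → List AffineRule
  | .inc i => [⟨1, 0, registerPrime i, 0⟩]
  | .dec i => [⟨registerPrime i, 0, 1, 0⟩]
  | .zero i => (List.Ico 1 (registerPrime i)).map fun r => ⟨registerPrime i, r, registerPrime i, r⟩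

/-- The action of an instruction on Gödel numbers. -/
def Instr.NumberStep (ι : Instr) (n m : ℕ) : Prop := ∃ ρ ∈ ι.rules, ρ.Step n m

theorem Instr.numberStep_zero_iff {i n m : ℕ} :
    (Instr.zero i).NumberStep n m ↔ ¬ registerPrime i ∣ n ∧ m = n := by
  simp only [NumberStep, rules, List.mem_map, List.Ico.mem, AffineRule.Step]
  constructor
  · rintro ⟨_, ⟨r, ⟨hr, hrp⟩, rfl⟩, k, rfl, rfl⟩
    exact ⟨(Nat.dvd_add_left (dvd_mul_right _ k)).not.2 (Nat.not_dvd_of_pos_of_lt hr hrp), rfl⟩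
  · rintro ⟨hdvd, rfl⟩
    exact ⟨_, ⟨m % registerPrime i, ⟨Nat.pos_of_ne_zero fun h => hdvd (Nat.dvd_of_mod_eq_zero h),
      Nat.mod_lt _ (prime_registerPrime i).pos⟩, rfl⟩, m / registerPrime i,
      (Nat.mod_add_div _ _).symm, (Nat.mod_add_div _ _).symm⟩

theorem Instr.NumberStep.step_registers {ι : Instr} {n m : ℕ} (h : ι.NumberStep n m) (hn : n ≠ 0) :
    m ≠ 0 ∧ ι.Step (registers n) (registers m) := by
  cases ι with
  | inc i =>
    obtain ⟨_, hmem, k, hk, rfl⟩ := h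
    obtain rfl := List.mem_singleton.1 hmem
    obtain rfl : n = k := by simpa using hk
    simpa [hn, (prime_registerPrime i).ne_zero, Step] using registers_mul hn i
  | dec i =>
    obtain ⟨_, hmem, k, rfl, rfl⟩ := h
    obtain rfl := List.mem_singleton.1 hmem
    have hk : k ≠ 0 := by rintro rfl; simp at hn
    simp [hk, Step, registers_mul hk]
  | zero i =>
    obtain ⟨hdvd, rfl⟩ := numberStep_zero_iff.1 h
    exact ⟨hn, (registers_eq_zero_iff hn).2 hdvd, rfl⟩

theorem Instr.Step.exists_numberStep {ι : Instr} {n : ℕ} {v : ℕ → ℕ} (h : ι.Step (registers n) v)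
    (hn : n ≠ 0) : ∃ m ≠ 0, ι.NumberStep n m ∧ registers m = v := by
  cases ι with
  | inc i =>
    exact ⟨registerPrime i * n, mul_ne_zero (prime_registerPrime i).ne_zero hn,
      ⟨_, List.mem_singleton_self _, n, by simp, by simp⟩, (registers_mul hn i).trans h.symm⟩
  | dec i =>
    obtain ⟨x, hx, rfl⟩ := h
    obtain ⟨m, hm, rfl, hreg⟩ := exists_eq_mul_of_registers_eq_succ hn hx
    exact ⟨m, hm, ⟨_, List.mem_singleton_self _, m, by simp, by simp⟩, hreg⟩
  | zero i =>
    obtain ⟨hi, rfl⟩ := h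
    exact ⟨n, hn, numberStep_zero_iff.2 ⟨(registers_eq_zero_iff hn).1 hi, rfl⟩, rfl⟩

theorem executes_registers_iff {P : RegularExpression Instr} {n : ℕ} (hn : n ≠ 0) :
    Executes Instr.Step P (registers n) 0 ↔ Executes Instr.NumberStep P n 1 := by
  constructor <;> intro h
  · obtain ⟨m, hm, hm0, hreg⟩ := h.simulate (I := Instr.NumberStep)
      (R := fun n v => n ≠ 0 ∧ registers n = v) (fun ι n v v' hstep ⟨hn, hreg⟩ => by
        obtain ⟨m, hm, hnm, hreg'⟩ := (hreg ▸ hstep).exists_numberStep hn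
        exact ⟨m, hnm, hm, hreg'⟩) ⟨hn, rfl⟩
    exact eq_one_of_registers_eq_zero hm0 hreg ▸ hm
  · obtain ⟨v, hv, -, rfl⟩ := h.simulate (I := Instr.Step)
      (R := fun v n => n ≠ 0 ∧ v = registers n) (fun ι v n m hstep ⟨hn, hreg⟩ => by
        obtain ⟨hm, hnm⟩ := hstep.step_registers hn
        exact ⟨_, hreg ▸ hnm, hm, rfl⟩) ⟨hn, rfl⟩
    exact registers_one ▸ hv

theorem exists_affine_program_not_computablePred : ∃ P : RegularExpression AffineRule,
    ¬ ComputablePred fun x : ℕ => Executes AffineRule.Step P (2 ^ x) 1 := by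
  obtain ⟨P, hP⟩ := exists_program_not_computablePred
  have hrules : (fun ι : Instr => Executes AffineRule.Step (ι.rules.map .char).sum) =
      Instr.NumberStep := by
    funext ι n m
    simp [executes_sum, Instr.NumberStep]
  refine ⟨substitute (fun ι => (ι.rules.map .char).sum) P, fun h => hP (h.of_eq fun x => ?_)⟩
  rw [executes_substitute, hrules, ← executes_registers_iff (by positivity), registers_two_pow]

/-! ### Affine programs as rational sets of group elements -/

/-- The subset of a monoid denoted by a rational expression, whose words are multiplied from right
to left. -/
def rationalSet {M : Type*} [Monoid M] (P : RegularExpression M) : Set M :=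
  {w | Executes (fun u x y => y = u * x) P 1 w}

theorem executes_star_mul_left_iff {M : Type*} [Monoid M] {u x y : M} :
    Executes (fun u x y : M => y = u * x) (.star (.char u)) x y ↔ ∃ k, y = u ^ k * x := by
  rw [executes_star]
  constructor
  · intro h
    induction h with
    | refl => exact ⟨0, by simp⟩
    | tail _ hlast ih =>
      obtain ⟨k, rfl⟩ := ih
      exact ⟨k + 1, by rw [pow_succ', mul_assoc]; exact hlast⟩
  · rintro ⟨k, rfl⟩
    induction k with
    | zero => simp [ReflTransGen.refl]
    | succ k ih => exact ih.tail (by simp [pow_succ', mul_assoc])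

/-- An affine rule as a rational expression over a group. The block `a * (b * c⁻¹) ^ m * d *
(c ^ slope * b⁻¹ ^ modulus) ^ k * (c ^ intercept * b⁻¹ ^ residue)` cancels a power `b ^ n` on its
right and leaves `b ^ m`, where `n` and `m` are related by the rule, if both of its iterations are
as long as intended. -/
def AffineRule.expression {Γ : Type*} [Group Γ] (a b c d : Γ) (ρ : AffineRule) :
    RegularExpression Γ :=
  .char (c ^ ρ.intercept * b⁻¹ ^ ρ.residue) * .star (.char (c ^ ρ.slope * b⁻¹ ^ ρ.modulus)) *
    .char d * .star (.char (b * c⁻¹)) * .char a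

/-- The program `P` as a rational expression, followed by the check that its final value is `1` and
the removal of the markers `a * d` left by the rules. -/
def affineExpression {Γ : Type*} [Group Γ] (a b c d : Γ) (P : RegularExpression AffineRule) :
    RegularExpression Γ :=
  substitute (AffineRule.expression a b c d) P * .char b⁻¹ * .star (.char (d⁻¹ * a⁻¹))

section Expression

variable {Γ K : Type*} [Group Γ] [Group K] {a b c d : Γ}

theorem AffineRule.executes_expression_iff {ρ : AffineRule} {x y : Γ} :
    Executes (fun u x y => y = u * x) (ρ.expression a b c d) x y ↔
      ∃ k l : ℕ, y = a * ((b * c⁻¹) ^ l * (d * ((c ^ ρ.slope * b⁻¹ ^ ρ.modulus) ^ k *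
        (c ^ ρ.intercept * b⁻¹ ^ ρ.residue * x)))) := by
  simp only [expression, executes_mul, executes_char, executes_star_mul_left_iff]
  aesop

theorem mem_rationalSet_affineExpression_iff {P : RegularExpression AffineRule} {w : Γ} :
    w ∈ rationalSet (affineExpression a b c d P) ↔ ∃ N : ℕ, ∃ u,
      Executes (fun ρ => Executes (fun u x y => y = u * x) (ρ.expression a b c d)) P 1 u ∧
        w = (d⁻¹ * a⁻¹) ^ N * (b⁻¹ * u) := by
  simp only [rationalSet, affineExpression, Set.mem_ofPred_eq, executes_mul, executes_char,
    executes_star_mul_left_iff, executes_substitute]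
  aesop

theorem block_eq (hab : Commute a b) (hbc : Commute b c) (hcd : Commute c d) (α β p r k : ℕ) :
    a * ((b * c⁻¹) ^ (β + α * k) * (d * ((c ^ α * b⁻¹ ^ p) ^ k * (c ^ β * b⁻¹ ^ r)))) =
      b ^ (β + α * k) * (a * d) * (b ^ (r + p * k))⁻¹ := by
  set m := β + α * k with hm
  have hread : (c ^ α * b⁻¹ ^ p) ^ k * (c ^ β * b⁻¹ ^ r) = c ^ m * (b ^ (r + p * k))⁻¹ := by
    rw [(hbc.symm.inv_right.pow_pow α p).mul_pow, mul_assoc, ← pow_mul, ← pow_mul,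
      ← (hbc.symm.inv_right.pow_pow β (p * k)).left_comm, ← pow_add, ← mul_assoc, ← pow_add,
      inv_pow, hm, add_comm (α * k), add_comm (p * k)]
  calc a * ((b * c⁻¹) ^ m * (d * ((c ^ α * b⁻¹ ^ p) ^ k * (c ^ β * b⁻¹ ^ r))))
      = a * (b ^ m * (c ^ m)⁻¹ * (d * (c ^ m * (b ^ (r + p * k))⁻¹))) := by
        rw [hread, hbc.inv_right.mul_pow, inv_pow]
    _ = b ^ m * (a * d) * (b ^ (r + p * k))⁻¹ := by
        rw [← (hcd.pow_left m).left_comm]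
        simp only [mul_assoc, inv_mul_cancel_left, (hab.pow_right m).left_comm]

theorem exists_mem_rationalSet_affineExpression (f : Γ →* K) (hab : Commute (f a) (f b))
    (hbc : Commute (f b) (f c)) (hcd : Commute (f c) (f d)) {P : RegularExpression AffineRule}
    {n : ℕ} (h : Executes AffineRule.Step P n 1) :
    ∃ w ∈ rationalSet (affineExpression a b c d P), f w = (f b ^ n)⁻¹ := by
  obtain ⟨u, hu, N, hN⟩ := h.simulate
    (I := fun ρ => Executes (fun u x y => y = u * x) (ρ.expression a b c d))
    (R := fun (u : Γ) m => ∃ N : ℕ, f u = f b ^ m * (f a * f d) ^ N * (f b ^ n)⁻¹) (x := 1)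
    (by
      rintro ρ x _ _ ⟨k, rfl, rfl⟩ ⟨N, hN⟩
      refine ⟨_, AffineRule.executes_expression_iff.2 ⟨k, ρ.intercept + ρ.slope * k, rfl⟩,
        N + 1, ?_⟩
      have hblock := block_eq hab hbc hcd ρ.slope ρ.intercept ρ.modulus ρ.residue k
      simp only [map_mul, map_pow, map_inv, hN, pow_succ']
      simp only [← mul_assoc] at hblock ⊢
      rw [hblock]
      simp [mul_assoc]) ⟨0, by simp⟩
  exact ⟨_, mem_rationalSet_affineExpression_iff.2 ⟨N, u, hu, rfl⟩, by
    rw [pow_one] at hN; simp [hN, ← mul_inv_rev, mul_assoc]⟩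

end Expression

/-! ### Soundness of the rational expressions on a pair of tapes -/

/-- A pair of tapes carrying integers, on which the affine expressions are shown to have no runs
but the intended ones. -/
abbrev Tapes : Type := (ℤ → ℤ) × (ℤ → ℤ)

/-- The translation of a tape by one cell to the right. -/
def tapeShift : Equiv.Perm (ℤ → ℤ) := (Equiv.addRight 1).arrowCongr (Equiv.refl ℤ)

/-- The four letters of the affine expressions as operations on tapes. A counter is the cell `0` of
a tape; `b` and `c` increment the counters of the two tapes, and `d` and `a` set them aside. -/
def tapeLetter : Fin 4 → Equiv.Perm Tapes :=
  ![Equiv.prodCongr 1 tapeShift, Equiv.addRight (Pi.single 0 1, 0),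
    Equiv.addRight (0, Pi.single 0 1), Equiv.prodCongr tapeShift 1]

/-- The action on tapes of the words in the four letters. -/
def tapeAction : FreeGroup (Fin 4) →* Equiv.Perm Tapes := FreeGroup.lift tapeLetter

/-- The tapes whose only nonzero cell is the first counter, with value `n`. -/
def counterTapes (n : ℤ) : Tapes := (Pi.single 0 n, 0)

/-- Some cell to the right of the counters is nonzero. -/
def IsSpoilt (x : Tapes) : Prop := ∃ j > 0, x.1 j ≠ 0 ∨ x.2 j ≠ 0

section Tapes

variable {f g : ℤ → ℤ}

@[simp] theorem tapeShift_apply (j : ℤ) : tapeShift f j = f (j - 1) := rfl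

@[simp] theorem tapeShift_zero : tapeShift 0 = 0 := rfl

theorem commute_tapeLetter_succ (i : Fin 3) :
    Commute (tapeLetter i.castSucc) (tapeLetter i.succ) := by
  fin_cases i <;> ext x j <;> simp [tapeLetter, add_right_comm]

theorem tapeLetter_block_apply (ρ : AffineRule) (k l : ℕ) :
    (tapeLetter 0 * ((tapeLetter 1 * (tapeLetter 2)⁻¹) ^ l * (tapeLetter 3 *
      ((tapeLetter 2 ^ ρ.slope * (tapeLetter 1)⁻¹ ^ ρ.modulus) ^ k *
        (tapeLetter 2 ^ ρ.intercept * (tapeLetter 1)⁻¹ ^ ρ.residue))))) (f, g) =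
      (tapeShift (f - Pi.single 0 (ρ.residue + ρ.modulus * k : ℤ)) + Pi.single 0 (l : ℤ),
        tapeShift (g + Pi.single 0 (ρ.intercept + ρ.slope * k - l : ℤ))) := by
  simp only [tapeLetter, Matrix.cons_val, Equiv.neg_addRight, ← Equiv.addRight_add,
    Equiv.nsmul_addRight]
  ext j <;> by_cases hj : j = 0 <;> by_cases hj' : j = 1 <;> simp [hj, hj', sub_eq_zero]
  all_goals ring

theorem IsSpoilt.block {x : Tapes} (hx : IsSpoilt x) (u v w : ℤ) :
    IsSpoilt (tapeShift (x.1 + Pi.single 0 u) + Pi.single 0 v,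
      tapeShift (x.2 + Pi.single 0 w)) := by
  obtain ⟨j, hj, h⟩ := hx
  refine ⟨j + 1, by omega, ?_⟩
  simpa [hj.ne', show j + 1 ≠ 0 by omega] using h

theorem eq_and_eq_zero_of_not_isSpoilt {n p q l : ℤ} (h : ¬ IsSpoilt
      (tapeShift (Pi.single 0 n - Pi.single 0 p) + Pi.single 0 l,
        tapeShift (0 + Pi.single 0 q))) :
    n = p ∧ q = 0 := by
  simpa [IsSpoilt, sub_eq_zero] using not_exists.1 h 1

theorem AffineRule.tapeAction_expression {ρ : AffineRule} {u v : FreeGroup (Fin 4)} {x : Tapes}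
    (h : Executes (fun u x y => y = u * x) (ρ.expression (.of 0) (.of 1) (.of 2) (.of 3)) u v) :
    ∃ k l : ℕ, tapeAction v x =
      (tapeShift ((tapeAction u x).1 - Pi.single 0 (ρ.residue + ρ.modulus * k : ℤ)) +
        Pi.single 0 (l : ℤ),
        tapeShift ((tapeAction u x).2 + Pi.single 0 (ρ.intercept + ρ.slope * k - l : ℤ))) := by
  obtain ⟨k, l, rfl⟩ := executes_expression_iff.1 h
  refine ⟨k, l, .trans ?_ (tapeLetter_block_apply ρ k l)⟩
  simp [tapeAction]

theorem tapeAction_eq_counterTapes_or_isSpoilt {P : RegularExpression AffineRule}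
    {u : FreeGroup (Fin 4)} {n : ℕ}
    (hu : Executes (fun ρ => Executes (fun u x y => y = u * x)
      (ρ.expression (.of 0) (.of 1) (.of 2) (.of 3))) P 1 u) :
    IsSpoilt (tapeAction u (counterTapes n)) ∨
      ∃ m : ℕ, Executes AffineRule.Step P n m ∧
        tapeAction u (counterTapes n) = counterTapes m := by
  refine hu.simulate_or_dead (R := fun (m : ℕ) u => tapeAction u (counterTapes n) = counterTapes m)
    (D := fun u => IsSpoilt (tapeAction u (counterTapes n))) ?_ ?_ (by simp)
  · intro ρ u v huv hspoilt
    obtain ⟨k, l, hv⟩ := AffineRule.tapeAction_expression huv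
    rw [hv, sub_eq_add_neg, ← Pi.single_neg]
    exact hspoilt.block _ _ _
  · intro ρ m u v huv hm
    obtain ⟨k, l, hv⟩ := AffineRule.tapeAction_expression huv
    rw [hv, hm, or_iff_not_imp_left]
    intro h
    obtain ⟨hn, hl⟩ := eq_and_eq_zero_of_not_isSpoilt h
    refine ⟨l, ⟨k, by exact_mod_cast hn, by omega⟩, ?_⟩
    simp [counterTapes, hl, hn]

/-- Runs other than the intended ones spoil the tapes for good. -/
theorem executes_of_tapeAction_eq_zero {P : RegularExpression AffineRule} {w : FreeGroup (Fin 4)}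
    (hw : w ∈ rationalSet (affineExpression (.of 0) (.of 1) (.of 2) (.of 3) P)) {n : ℕ}
    (h : tapeAction w (counterTapes n) = 0) : Executes AffineRule.Step P n 1 := by
  obtain ⟨N, u, hu, rfl⟩ := mem_rationalSet_affineExpression_iff.1 hw
  have hone : tapeAction u (counterTapes n) = counterTapes 1 := by
    have hfix : IsFixedPt (tapeAction ((.of 3)⁻¹ * (.of 0)⁻¹)) 0 := by
      rw [IsFixedPt, map_mul, Equiv.Perm.mul_apply, map_inv, map_inv, Equiv.Perm.inv_eq_iff_eq,
        Equiv.Perm.inv_eq_iff_eq]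
      rfl
    rw [map_mul, Equiv.Perm.mul_apply, map_pow, ← (hfix.perm_pow N).eq,
      EmbeddingLike.apply_eq_iff_eq, map_mul, Equiv.Perm.mul_apply, map_inv,
      Equiv.Perm.inv_eq_iff_eq] at h
    rw [h]
    simp [tapeAction, tapeLetter, counterTapes]
  rcases tapeAction_eq_counterTapes_or_isSpoilt hu with hspoilt | ⟨m, hm, hmu⟩
  · rw [hone] at hspoilt
    obtain ⟨j, hj, hne⟩ := hspoilt
    simp [counterTapes, hj.ne'] at hne
  · have : m = 1 := by simpa [counterTapes] using hmu.symm.trans hone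
    exact this ▸ hm

end Tapes

/-! ### Rational sets and finite labelled graphs -/

/-- Motion along the edges `(p, u, q)` of a labelled graph, with a value that is multiplied on the
left by the labels. -/
def Traverses {S M : Type*} [Monoid M] (E : List (S × M × S)) : S × M → S × M → Prop :=
  ReflTransGen fun x y => ∃ u, (x.1, u, y.1) ∈ E ∧ y.2 = u * x.2

/-- The edges of the automaton whose states are the expressions that remain to be executed, among
them those used to execute `P` and continue with `K`. -/
def edgesFrom {M : Type*} [Monoid M] : RegularExpression M → RegularExpression M →
    List (RegularExpression M × M × RegularExpression M)
  | .zero, _ => []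
  | .epsilon, K => [(1 * K, 1, K)]
  | .char u, K => [(.char u * K, u, K)]
  | .plus P Q, K => ((P + Q) * K, 1, P * K) :: ((P + Q) * K, 1, Q * K) ::
      (edgesFrom P K ++ edgesFrom Q K)
  | .comp P Q, K => (P * Q * K, 1, P * (Q * K)) :: (edgesFrom P (Q * K) ++ edgesFrom Q K)
  | .star P, K => (.star P * K, 1, K) :: (.star P * K, 1, P * (.star P * K)) ::
      edgesFrom P (.star P * K)

section Traverses

variable {S T M : Type*} [Monoid M] {E : List (S × M × S)} {P K p q : RegularExpression M}
  {u x y z : M}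

theorem Traverses.single {p q : S} (h : (p, u, q) ∈ E) (x : M) :
    Traverses E (p, x) (q, u * x) :=
  ReflTransGen.single ⟨u, h, rfl⟩

theorem Traverses.of_one_mem {p q : S} (h : (p, 1, q) ∈ E) (x : M) :
    Traverses E (p, x) (q, x) := by
  simpa using Traverses.single h x

theorem executes_of_mem_edgesFrom (h : (p, u, q) ∈ edgesFrom P K)
    (hq : Executes (fun u x y => y = u * x) q (u * x) z) :
    Executes (fun u x y => y = u * x) p x z := by
  induction P generalizing K with
  | zero => cases h
  | epsilon | char v =>
    simp only [edgesFrom, List.mem_singleton, Prod.mk.injEq] at h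
    obtain ⟨rfl, rfl, rfl⟩ := h
    simpa using hq
  | plus P Q ihP ihQ =>
    simp only [edgesFrom, List.mem_cons, List.mem_append, Prod.mk.injEq] at h
    rcases h with ⟨rfl, rfl, rfl⟩ | ⟨rfl, rfl, rfl⟩ | h | h
    · obtain ⟨v, hv, hvz⟩ := hq
      exact ⟨v, .inl (by simpa using hv), hvz⟩
    · obtain ⟨v, hv, hvz⟩ := hq
      exact ⟨v, .inr (by simpa using hv), hvz⟩
    · exact ihP h
    · exact ihQ h
  | comp P Q ihP ihQ =>
    simp only [edgesFrom, List.mem_cons, List.mem_append, Prod.mk.injEq] at h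
    rcases h with ⟨rfl, rfl, rfl⟩ | h | h
    · obtain ⟨v, hv, w, hw, hwz⟩ := hq
      exact ⟨w, ⟨v, by simpa using hv, hw⟩, hwz⟩
    · exact ihP h
    · exact ihQ h
  | star P ih =>
    simp only [edgesFrom, List.mem_cons, Prod.mk.injEq] at h
    rcases h with ⟨rfl, rfl, rfl⟩ | ⟨rfl, rfl, rfl⟩ | h
    · exact ⟨x, .refl, by simpa using hq⟩
    · obtain ⟨v, hv, w, hw, hwz⟩ := hq
      exact ⟨w, .head (by simpa using hv) hw, hwz⟩
    · exact ih h

theorem traverses_of_executes {E : List (RegularExpression M × M × RegularExpression M)}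
    (hE : edgesFrom P K ⊆ E) (h : Executes (fun u x y => y = u * x) P x y) :
    Traverses E (P * K, x) (K, y) := by
  induction P generalizing K x y with
  | zero => exact h.elim
  | epsilon =>
    obtain rfl : x = y := h
    exact .of_one_mem (hE (List.mem_singleton_self _)) x
  | char v =>
    obtain rfl : y = v * x := h
    exact .single (hE (List.mem_singleton_self _)) x
  | plus P Q ihP ihQ =>
    simp only [edgesFrom, List.cons_subset, List.append_subset] at hE
    obtain ⟨hP, hQ, hEP, hEQ⟩ := hE
    rcases h with h | h
    · exact (Traverses.of_one_mem hP x).trans (ihP hEP h)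
    · exact (Traverses.of_one_mem hQ x).trans (ihQ hEQ h)
  | comp P Q ihP ihQ =>
    simp only [edgesFrom, List.cons_subset, List.append_subset] at hE
    obtain ⟨hPQ, hEP, hEQ⟩ := hE
    obtain ⟨v, hv, hvy⟩ := h
    exact (Traverses.of_one_mem hPQ x).trans
      ((ihP hEP hv).trans (ihQ hEQ hvy))
  | star P ih =>
    simp only [edgesFrom, List.cons_subset] at hE
    obtain ⟨hexit, hloop, hEP⟩ := hE
    refine .trans ?_ (Traverses.of_one_mem hexit y)
    induction h with
    | refl => exact .refl
    | @tail v w _ hlast ih' =>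
      exact ih'.trans ((Traverses.of_one_mem hloop v).trans
        (ih hEP hlast))

theorem traverses_edgesFrom_iff :
    Traverses (edgesFrom P 1) (P * 1, 1) (1, y) ↔ y ∈ rationalSet P := by
  refine ⟨fun h => ?_, traverses_of_executes (List.Subset.refl _)⟩
  suffices ∀ a, Traverses (edgesFrom P 1) a (1, y) →
      Executes (fun u x y => y = u * x) a.1 a.2 y by simpa [rationalSet] using this _ h
  intro a h
  induction h using ReflTransGen.head_induction_on with
  | refl => rfl
  | head hstep _ ih =>
    obtain ⟨u, hu, hz⟩ := hstep
    exact executes_of_mem_edgesFrom hu (hz ▸ ih)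

theorem traverses_map_iff {V : Set S} {f : S → T} (hf : V.InjOn f)
    (hE : ∀ e ∈ E, e.1 ∈ V ∧ e.2.2 ∈ V) {p q : S} (hp : p ∈ V) (hq : q ∈ V) :
    Traverses (E.map (Prod.map f (Prod.map id f))) (f p, x) (f q, y) ↔
      Traverses E (p, x) (q, y) := by
  constructor <;> intro h
  · suffices ∀ b, Traverses (E.map (Prod.map f (Prod.map id f))) (f p, x) b →
        ∃ r ∈ V, f r = b.1 ∧ Traverses E (p, x) (r, b.2) by
      obtain ⟨r, hr, hrq, hpath⟩ := this _ h
      exact hf hr hq hrq ▸ hpath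
    intro b h
    induction h with
    | refl => exact ⟨p, hp, rfl, .refl⟩
    | tail _ hlast ih =>
      obtain ⟨r, hr, hrb, hpath⟩ := ih
      obtain ⟨u, hu, hx⟩ := hlast
      obtain ⟨⟨p', u', q'⟩, hmem, he⟩ := List.mem_map.1 hu
      obtain ⟨hp', rfl, hq'⟩ : f p' = _ ∧ u' = u ∧ f q' = _ := by simpa using he
      obtain rfl := hf hr (hE _ hmem).1 (hrb.trans hp'.symm)
      exact ⟨q', (hE _ hmem).2, hq', hpath.tail ⟨u', hmem, hx⟩⟩
  · exact h.lift (Prod.map f id) fun x y ⟨u, hu, hy⟩ => ⟨u, List.mem_map_of_mem hu, hy⟩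

/-- Kleene's theorem. -/
theorem exists_traverses_iff_mem_rationalSet (P : RegularExpression M) :
    ∃ (E : List (ℕ × M × ℕ)) (s t : ℕ), ∀ w, Traverses E (s, 1) (t, w) ↔ w ∈ rationalSet P := by
  set E := edgesFrom P 1
  set states := (P * 1) :: 1 :: (E.map (·.1) ++ E.map (·.2.2)) with hstates
  obtain ⟨f, hf⟩ := Set.countable_iff_exists_injOn.1 (List.finite_toSet states).countable
  refine ⟨E.map (Prod.map f (Prod.map id f)), f (P * 1), f 1, fun w => ?_⟩
  rw [traverses_map_iff hf (fun e he => ?_) (by simp [hstates]) (by simp [hstates]),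
    traverses_edgesFrom_iff]
  simp only [hstates, Set.mem_ofPred_eq, List.mem_cons, List.mem_append]
  exact ⟨.inr (.inr (.inl (List.mem_map_of_mem he))), .inr (.inr (.inr (List.mem_map_of_mem he)))⟩

end Traverses

/-! ### From rational sets to submonoids -/

/-- The group element attached to the edge `(p, u, q)` of a labelled graph, given a group element
for each vertex. -/
def edgeElement {S M Γ : Type*} [Group Γ] (label : M → Γ) (vertex : S → Γ) (e : S × M × S) : Γ :=
  vertex e.2.2 * label e.2.1 * (vertex e.1)⁻¹

theorem Traverses.mem_closure {S M Γ : Type*} [Monoid M] [Group Γ] {E : List (S × M × S)}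
    {p q : S} {w : M} (label : M →* Γ) (vertex : S → Γ) (h : Traverses E (p, 1) (q, w)) :
    vertex q * label w * (vertex p)⁻¹ ∈
      Submonoid.closure {g | ∃ e ∈ E, edgeElement label vertex e = g} := by
  suffices ∀ b, Traverses E (p, 1) b → vertex b.1 * label b.2 * (vertex p)⁻¹ ∈
      Submonoid.closure {g | ∃ e ∈ E, edgeElement label vertex e = g} from this _ h
  intro b h
  induction h with
  | refl => simp
  | tail _ hlast ih =>
    obtain ⟨u, hu, hx⟩ := hlast
    have hmem := mul_mem (Submonoid.subset_closure (s := {g | ∃ e ∈ E,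
      edgeElement label vertex e = g}) ⟨_, hu, rfl⟩) ih
    simpa [edgeElement, hx, mul_assoc] using hmem

section Lines

variable {S X : Type*} [DecidableEq S]

/-- The shift of the line with label `q`, where `Option (S × ℤ)` is a family of lines meeting in the
common point `none`, the hub, which stands between the points `0` and `1` of each line. -/
def lineShift (q : S) : Equiv.Perm (Option (S × ℤ)) :=
  Equiv.swap none (some (q, 1)) *
    Equiv.optionCongr (Equiv.Perm.prodExtendRight q (Equiv.addRight 1))

theorem lineShift_none (q : S) : lineShift q none = some (q, 1) := by
  simp [lineShift]

theorem lineShift_same {q : S} {n : ℤ} (hn : 0 < n) :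
    lineShift q (some (q, n)) = some (q, n + 1) := by
  simp [lineShift, Equiv.swap_apply_of_ne_of_ne, hn.ne']

theorem lineShift_of_ne {q r : S} (h : r ≠ q) (n : ℤ) :
    lineShift q (some (r, n)) = some (r, n) := by
  simp [lineShift, Equiv.swap_apply_of_ne_of_ne, h, Equiv.Perm.prodExtendRight_apply_ne]

variable {β : Type*} {θ : β → Equiv.Perm X} {E : List (S × FreeGroup β × S)} {s : S} {x : X}
  {z : Option (S × ℤ) × X}

/-- The action on `Option (S × ℤ) × X` in which vertices shift lines and labels act on `X`, but
only over the hub. -/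
def lineAction (θ : β → Equiv.Perm X) :
    FreeGroup (β ⊕ S) →* Equiv.Perm (Option (S × ℤ) × X) :=
  FreeGroup.lift (Sum.elim (fun i => Equiv.Perm.prodExtendRight none (θ i))
    fun q => Equiv.prodCongr (lineShift q) 1)

/-- The points of the lines of the vertices which are reachable from `s`. They are on the side of
the line where `lineShift` enters it from the hub, over the translates of `x` by path labels. -/
def IsReached (θ : β → Equiv.Perm X) (E : List (S × FreeGroup β × S)) (s : S) (x : X)
    (z : Option (S × ℤ) × X) : Prop :=
  ∃ r n w, 0 < n ∧ Traverses E (s, 1) (r, w) ∧ z = (some (r, n), FreeGroup.lift θ w x)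

theorem lineAction_map_inl (u : FreeGroup β) :
    lineAction (S := S) θ (FreeGroup.map Sum.inl u) =
      Equiv.Perm.prodExtendRight none (FreeGroup.lift θ u) := by
  induction u using FreeGroup.induction_on with
  | C1 => ext ⟨_ | _, _⟩ <;> simp [Equiv.Perm.prodExtendRight]
  | of i => simp [lineAction]
  | inv_of i hi =>
    rw [map_inv, map_inv, map_inv, hi]
    rfl
  | mul u v hu hv =>
    rw [map_mul, map_mul, map_mul, hu, hv]
    ext ⟨_ | _, _⟩ <;> simp [Equiv.Perm.prodExtendRight]

theorem lineAction_conj_apply (p q : S) (u : FreeGroup β) (y : Option (S × ℤ)) :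
    lineAction θ (.of (.inr q) * FreeGroup.map Sum.inl u * (.of (.inr p))⁻¹) (y, x) =
      Equiv.prodCongr (lineShift q) 1
        (Equiv.Perm.prodExtendRight none (FreeGroup.lift θ u) ((lineShift p)⁻¹ y, x)) := by
  rw [map_mul, map_mul, map_inv, lineAction_map_inl]
  simp only [lineAction, FreeGroup.lift_apply_of, Sum.elim_inr]
  rfl

theorem lineAction_conj_apply_one (p q : S) (u : FreeGroup β) :
    lineAction θ (.of (.inr q) * FreeGroup.map Sum.inl u * (.of (.inr p))⁻¹) (some (p, 1), x) =
      (some (q, 1), FreeGroup.lift θ u x) := by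
  rw [lineAction_conj_apply, Equiv.Perm.inv_eq_iff_eq.2 (lineShift_none p).symm]
  simp [lineShift_none]

theorem lineAction_conj_apply_of_inv_eq {p q r : S} (u : FreeGroup β) {m n : ℤ} (hn : 0 < n)
    (h : (lineShift p)⁻¹ (some (r, m)) = some (r, n)) :
    ∃ k > 0, lineAction θ (.of (.inr q) * FreeGroup.map Sum.inl u * (.of (.inr p))⁻¹)
      (some (r, m), x) = (some (r, k), x) := by
  rw [lineAction_conj_apply, h, Equiv.Perm.prodExtendRight_apply_ne _ (Option.some_ne_none _)]
  rcases eq_or_ne r q with rfl | hrq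
  · exact ⟨n + 1, by lia, by simp [lineShift_same hn]⟩
  · exact ⟨n, hn, by simp [lineShift_of_ne hrq]⟩

theorem IsReached.lineAction_edgeElement {e : S × FreeGroup β × S} (he : e ∈ E)
    (hz : IsReached θ E s x z) : IsReached θ E s x (lineAction θ
      (edgeElement (FreeGroup.map Sum.inl) (fun q => .of (.inr q)) e) z) := by
  obtain ⟨p, u, q⟩ := e
  obtain ⟨r, n, w, hn, hw, rfl⟩ := hz
  by_cases hhub : r = p ∧ n = 1
  · obtain ⟨rfl, rfl⟩ := hhub
    exact ⟨q, 1, u * w, one_pos, hw.tail ⟨u, he, rfl⟩, by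
      rw [edgeElement, lineAction_conj_apply_one, map_mul, Equiv.Perm.mul_apply]⟩
  obtain ⟨m, hm, hinv⟩ : ∃ m > 0, (lineShift p)⁻¹ (some (r, n)) = some (r, m) := by
    rcases eq_or_ne r p with rfl | hrp
    · have hn1 : 0 < n - 1 := by grind
      exact ⟨n - 1, hn1, by rw [Equiv.Perm.inv_eq_iff_eq, lineShift_same hn1, sub_add_cancel]⟩
    · exact ⟨n, hn, Equiv.Perm.inv_eq_iff_eq.2 (lineShift_of_ne hrp n).symm⟩
  obtain ⟨k, hk, hmove⟩ := lineAction_conj_apply_of_inv_eq (θ := θ) (q := q) u hm hinv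
  exact ⟨r, k, w, hk, hw, hmove⟩

theorem IsReached.of_mem_closure {g : FreeGroup (β ⊕ S)}
    (hg : g ∈ Submonoid.closure {g | ∃ e ∈ E,
      edgeElement (FreeGroup.map Sum.inl) (fun q => .of (.inr q)) e = g})
    (hz : IsReached θ E s x z) : IsReached θ E s x (lineAction θ g z) := by
  induction hg using Submonoid.closure_induction generalizing z with
  | mem g hg =>
    obtain ⟨e, he, rfl⟩ := hg
    exact hz.lineAction_edgeElement he
  | one => simpa
  | mul g h _ _ ihg ihh => simpa using ihg (ihh hz)

theorem exists_traverses_of_mem_closure {g : FreeGroup (β ⊕ S)}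
    (hg : g ∈ Submonoid.closure {g | ∃ e ∈ E,
      edgeElement (FreeGroup.map Sum.inl) (fun q => .of (.inr q)) e = g}) {t : S} {v : FreeGroup β}
    (h : lineAction θ g =
      lineAction θ (.of (.inr t) * FreeGroup.map Sum.inl v * (.of (.inr s))⁻¹)) :
    ∃ w, Traverses E (s, 1) (t, w) ∧ FreeGroup.lift θ w x = FreeGroup.lift θ v x := by
  obtain ⟨r, n, w, -, hw, hz⟩ := IsReached.of_mem_closure hg
    (z := (some (s, 1), x)) (θ := θ) (s := s) (x := x) ⟨s, 1, 1, one_pos, .refl, by simp⟩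
  rw [h, lineAction_conj_apply_one] at hz
  obtain ⟨⟨rfl, rfl⟩, hx⟩ : (t = r ∧ 1 = n) ∧ _ := by simpa using hz
  exact ⟨w, hw, hx.symm⟩

end Lines

/-! ### Conjugates of `a` by powers of `t` -/

/-- The element `t ^ i * a * t ^ (-i)` of `G`. -/
def aConj (i : ℤ) : G := .of 1 ^ i * .of 0 * (.of 1 ^ i)⁻¹

section Conjugates

variable {β K : Type*} [Group K]

theorem lift_oneRel_eq_one_iff (f : Fin 2 → K) :
    FreeGroup.lift f oneRel = 1 ↔ Commute (f 0) (f 1 * f 0 * (f 1)⁻¹) := by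
  simp only [oneRel, map_mul, map_inv, FreeGroup.lift_apply_of]
  rw [commute_iff_eq, ← mul_inv_eq_one (b := f 1 * f 0 * (f 1)⁻¹ * f 0)]
  group

theorem commute_aConj_succ (i : ℤ) : Commute (aConj i) (aConj (i + 1)) := by
  have hmk : FreeGroup.lift PresentedGroup.of = PresentedGroup.mk {oneRel} :=
    FreeGroup.ext_hom _ _ fun _ => FreeGroup.lift_apply_of
  have hbase := (lift_oneRel_eq_one_iff (PresentedGroup.of (rels := {oneRel}))).1
    (hmk ▸ PresentedGroup.one_of_mem rfl)
  have hsucc : aConj (i + 1) = .of 1 ^ i * (.of 1 * .of 0 * (.of 1)⁻¹) * (.of 1 ^ i)⁻¹ := by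
    rw [aConj, zpow_add_one]
    group
  rw [hsucc]
  exact (Commute.conj_iff (.of 1 ^ i)).2 hbase

/-- The homomorphism to the wreath product which sends `a` to `η` and translates by `t`. -/
theorem exists_hom_aConj {η : ℤ → K} (hη : ∀ i, Commute (η i) (η (i + 1))) :
    ∃ f : G →* (Multiplicative ℤ → K) ⋊[mulAutArrow] Multiplicative ℤ, ∀ i,
      f (aConj i) = SemidirectProduct.inl fun j => η (j.toAdd + i) := by
  set f : Fin 2 → (Multiplicative ℤ → K) ⋊[mulAutArrow] Multiplicative ℤ :=
    ![.inl fun j => η (Multiplicative.toAdd j), .inr (.ofAdd (-1))] with hf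
  have hconj (i : ℤ) : f 1 ^ i * f 0 * (f 1 ^ i)⁻¹ =
      .inl fun j => η (Multiplicative.toAdd j + i) := by
    simp only [hf, Matrix.cons_val, ← map_zpow, ← map_inv, ← SemidirectProduct.inl_aut]
    congr 1
    ext j
    change η (((Multiplicative.ofAdd (-1) ^ i)⁻¹ * j).toAdd) = _
    congr 1
    simp [add_comm]
  have hrel : ∀ r ∈ ({oneRel} : Set (FreeGroup (Fin 2))), FreeGroup.lift f r = 1 := by
    rintro _ rfl
    rw [lift_oneRel_eq_one_iff, ← zpow_one (f 1), hconj]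
    exact Commute.map (Pi.commute_iff.2 fun j => hη (Multiplicative.toAdd j)) _
  refine ⟨PresentedGroup.toGroup hrel, fun i => ?_⟩
  rw [← hconj i]
  simp [aConj]

/-- The conjugates of `a` have no relations but the commutation of neighbours. -/
theorem lift_eq_of_lift_aConj_eq {pos : β → ℤ} (hpos : Injective pos) {η : β → K}
    (hη : ∀ i j, pos j = pos i + 1 → Commute (η i) (η j)) {u v : FreeGroup β}
    (h : FreeGroup.lift (fun i => aConj (pos i)) u = FreeGroup.lift (fun i => aConj (pos i)) v) :
    FreeGroup.lift η u = FreeGroup.lift η v := by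
  obtain ⟨f, hf⟩ := exists_hom_aConj (η := extend pos η 1) fun i => by
    by_cases hi : ∃ x, pos x = i
    · obtain ⟨x, rfl⟩ := hi
      by_cases hj : ∃ y, pos y = pos x + 1
      · obtain ⟨y, hy⟩ := hj
        rw [← hy, hpos.extend_apply, hpos.extend_apply]
        exact hη x y hy
      · rw [extend_apply' _ _ _ hj]
        exact .one_right _
    · rw [extend_apply' _ _ _ hi]
      exact .one_left _
  let wreathLift : FreeGroup β →* Multiplicative ℤ → K :=
    FreeGroup.lift fun i j => extend pos η 1 (j.toAdd + pos i)
  have hwreath : f.comp (FreeGroup.lift fun i => aConj (pos i)) =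
      SemidirectProduct.inl.comp wreathLift :=
    FreeGroup.ext_hom _ _ fun i => by simp [wreathLift, hf]
  have heval : FreeGroup.lift η = (Pi.evalMonoidHom _ 1).comp wreathLift :=
    FreeGroup.ext_hom _ _ fun i => by simp [wreathLift, hpos.extend_apply]
  have huv : wreathLift u = wreathLift v := by
    apply SemidirectProduct.inl_injective (φ := mulAutArrow (G := Multiplicative ℤ))
    exact (DFunLike.congr_fun hwreath u).symm.trans
      ((congrArg f h).trans (DFunLike.congr_fun hwreath v))
  rw [heval, MonoidHom.comp_apply, huv, MonoidHom.comp_apply]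

end Conjugates

/-! ### The reduction -/

/-- The positions of the letters of the affine expressions and of the vertices of a graph among the
conjugates of `a`. Only successive letters are neighbours. -/
def conjPosition : Fin 4 ⊕ ℕ → ℤ := Sum.elim (fun i => i) fun q => 5 + 2 * q

theorem conjPosition_injective : Injective conjPosition := by
  rintro (i | q) (j | r) h <;> simp only [conjPosition, Sum.elim_inl, Sum.elim_inr] at h <;> grind

/-- The embedding of the letters and the vertices into `G` as conjugates of `a`. -/
def conjHom : FreeGroup (Fin 4 ⊕ ℕ) →* G := FreeGroup.lift fun i => aConj (conjPosition i)

theorem lineAction_tapeLetter_eq_of_conjHom_eq {u v : FreeGroup (Fin 4 ⊕ ℕ)}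
    (h : conjHom u = conjHom v) : lineAction tapeLetter u = lineAction tapeLetter v := by
  refine lift_eq_of_lift_aConj_eq conjPosition_injective (fun i j hij => ?_) h
  obtain ⟨k, rfl, rfl⟩ : ∃ k : Fin 3, i = .inl k.castSucc ∧ j = .inl k.succ := by
    rcases i with i | q <;> rcases j with j | r <;>
      simp only [conjPosition, Sum.elim_inl, Sum.elim_inr] at hij
    · exact ⟨⟨i, by omega⟩, rfl, congrArg _ (Fin.ext (by simp; omega))⟩
    all_goals omega
  have hk := Equiv.ext_iff.1 (commute_tapeLetter_succ k).eq
  ext ⟨_ | y, x⟩ : 1 <;> simp_all [Equiv.Perm.prodExtendRight]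

theorem tapeAction_inv_pow_counterTapes (n : ℕ) :
    tapeAction (.of 1 ^ n)⁻¹ (counterTapes n) = 0 := by
  rw [map_inv, Equiv.Perm.inv_eq_iff_eq, map_pow, tapeAction, FreeGroup.lift_apply_of]
  simp [tapeLetter, counterTapes, ← Pi.single_smul]

/-- The encoding of the input `n` of an affine program whose automaton leads from `s` to `t`. -/
def inputElement (s t n : ℕ) : FreeGroup (Fin 4 ⊕ ℕ) :=
  .of (.inr t) * FreeGroup.map Sum.inl (.of 1 ^ n)⁻¹ * (.of (.inr s))⁻¹

theorem exists_forall_executes_iff_mem_closure (P : RegularExpression AffineRule) :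
    ∃ (L : List (FreeGroup (Fin 4 ⊕ ℕ))) (s t : ℕ), ∀ n : ℕ, Executes AffineRule.Step P n 1 ↔
      conjHom (inputElement s t n) ∈ Submonoid.closure {g | ∃ u ∈ L, conjHom u = g} := by
  obtain ⟨E, s, t, hE⟩ := exists_traverses_iff_mem_rationalSet
    (affineExpression (.of 0) (.of 1) (.of 2) (.of 3 : FreeGroup (Fin 4)) P)
  refine ⟨E.map (edgeElement (FreeGroup.map Sum.inl) fun q => .of (.inr q)), s, t,
    fun n => ⟨fun h => ?_, fun h => ?_⟩⟩
  · have hcomm (i : Fin 3) : Commute (conjHom (FreeGroup.map Sum.inl (.of i.castSucc)))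
        (conjHom (FreeGroup.map Sum.inl (.of i.succ))) := by
      simpa [conjHom, conjPosition] using commute_aConj_succ i
    obtain ⟨w, hw, hwn⟩ := exists_mem_rationalSet_affineExpression (a := .of 0) (b := .of 1)
      (c := .of 2) (d := .of 3) (conjHom.comp (FreeGroup.map Sum.inl))
      (hcomm 0) (hcomm 1) (hcomm 2) h
    have := ((hE w).2 hw).mem_closure (conjHom.comp (FreeGroup.map Sum.inl))
      fun q => conjHom (.of (.inr q))
    rw [hwn] at this
    simpa [inputElement, edgeElement] using this
  · obtain ⟨g, hg, hgn⟩ : conjHom (inputElement s t n) ∈ (Submonoid.closure {g | ∃ e ∈ E,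
        edgeElement (FreeGroup.map Sum.inl) (fun q => .of (.inr q)) e = g}).map conjHom := by
      rw [MonoidHom.map_mclosure]
      convert h using 2
      aesop
    obtain ⟨w, hw, hwn⟩ := exists_traverses_of_mem_closure (x := counterTapes n) hg
      (lineAction_tapeLetter_eq_of_conjHom_eq hgn)
    exact executes_of_tapeAction_eq_zero ((hE w).1 hw)
      (hwn.trans (tapeAction_inv_pow_counterTapes n))

theorem π_append (u v : List (Fin 2 × Bool)) : π (u ++ v) = π u * π v :=
  map_mul (PresentedGroup.mk _) (FreeGroup.mk u) (FreeGroup.mk v)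

theorem π_surjective : Surjective π := fun g => by
  obtain ⟨w, rfl⟩ := PresentedGroup.mk_surjective _ g
  exact ⟨w.toWord, by rw [π, FreeGroup.mk_toWord]⟩

theorem exists_primrec_forall_π_eq_pow (g : G) :
    ∃ f : ℕ → List (Fin 2 × Bool), Primrec f ∧ ∀ n, π (f n) = g ^ n := by
  obtain ⟨u, rfl⟩ := π_surjective g
  refine ⟨fun n => n.rec [] fun _ v => v ++ u,
    Primrec.nat_rec₁ [] (Primrec.list_append.comp .snd (.const u)).to₂, fun n => ?_⟩
  induction n with
  | zero => rfl
  | succ n ih => rw [pow_succ, ← ih, ← π_append]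

theorem primrec_two_pow : Primrec fun n : ℕ => 2 ^ n :=
  (Primrec.nat_rec₁ 1 (Primrec.nat_mul.comp .snd (.const 2)).to₂).of_eq fun n => by
    induction n with
    | zero => rfl
    | succ n ih => rw [pow_succ, ← ih]

theorem submonoid_membership_undecidable_general :
    ∃ W : List (List (Fin 2 × Bool)), ¬ ComputablePred fun w : List (Fin 2 × Bool) =>
      π w ∈ Submonoid.closure {g : G | ∃ u ∈ W, π u = g} := by
  obtain ⟨P, hP⟩ := exists_affine_program_not_computablePred
  obtain ⟨L, s, t, hL⟩ := exists_forall_executes_iff_mem_closure P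
  choose word hword using π_surjective
  obtain ⟨f, hf, hπf⟩ := exists_primrec_forall_π_eq_pow (conjHom (.of (.inl 1)))⁻¹
  let U := word (conjHom (.of (.inr t)))
  let V := word (conjHom (.of (.inr s)))⁻¹
  refine ⟨L.map (word ∘ conjHom), fun h => hP ?_⟩
  refine ComputablePred.computable_of_manyOneReducible
    ⟨fun x => U ++ f (2 ^ x) ++ V, Primrec.to_comp ?_, fun x => (hL (2 ^ x)).trans ?_⟩ h
  · exact Primrec.list_append.comp (Primrec.list_append.comp (.const U) (hf.comp primrec_two_pow))
      (.const V)
  · simp [π_append, U, V, hword, hπf, inputElement, mul_assoc]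

/-- The (uniform) submonoid membership problem for the one-relator group `G` is
undecidable: no algorithm decides, given words `W = {w₁, …, w_m}` and a word `w`, whether
`π w` lies in the submonoid of `G` generated by `{π w₁, …, π w_m}`. -/
theorem submonoid_membership_undecidable :
    ¬ ComputablePred
      (fun p : List (List (Fin 2 × Bool)) × List (Fin 2 × Bool) =>
        π p.2 ∈ Submonoid.closure {g : G | ∃ u ∈ p.1, π u = g}) := by
  obtain ⟨W, hW⟩ := submonoid_membership_undecidable_general
  exact fun h => hW <| h.computable_of_manyOneReducible
    ⟨fun w => (W, w), (Primrec.pair (.const W) .id).to_comp, fun _ => .rfl⟩
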